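/- Let n ≥ 1 and let G = ℤ × ℤ/nℤ. The Chabauty space C(G) is homeomorphic to ℕ̄ × [d(n)], where the accumulation points (the points (∞, i)) correspond to the d(n) subgroups {0} × ⟨m⟩ for m a positive divisor of n. -/

import Mathlib

open OnePoint

/-- The Chabauty space of an additive topological group `G`:
the set of closed additive subgroups of `G`. -/
def ChabautySpace (G : Type*) [AddGroup G] [TopologicalSpace G] : Type _ :=
  {H : AddSubgroup G // IsClosed (H : Set G)}

/-- The Chabauty topology on the space of closed subgroups, generated by the sets
`O_K = {H | H ∩ K = ∅}` for `K` compact and `O'_U = {H | H ∩ U ≠ ∅}` for `U` open. -/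
instance ChabautySpace.instTopologicalSpace (G : Type*) [AddGroup G] [TopologicalSpace G] :
    TopologicalSpace (ChabautySpace G) :=
  TopologicalSpace.generateFrom
    ({S | ∃ K : Set G, IsCompact K ∧ S = {H : ChabautySpace G | (H.1 : Set G) ∩ K = ∅}} ∪
     {S | ∃ U : Set G, IsOpen U ∧ S = {H : ChabautySpace G | ((H.1 : Set G) ∩ U).Nonempty}})

/-!
Sort the closed subgroups `H` of `ℤ × A` by their slice `{a | (0, a) ∈ H}`, a subgroup of the
finite group `A`. A point `x` with `x.1 ≠ 0` lies in only finitely many subgroups, because each of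
them contains the finite-index subgroup `(|A| * x.1)ℤ × {0}`. Hence there are countably many
subgroups, and distinct subgroups with the same slice `K` can only accumulate at `{0} × K`; as
there are infinitely many of them, they form a convergent sequence with its limit, a copy of
`OnePoint ℕ`. Together these copies give a continuous bijection from a compact space onto a
Hausdorff one. For `A = ZMod n` the slices are the subgroups `⟨m⟩` with `m ∣ n`, and `m` is
recovered from `⟨m⟩` as its index.
-/

open Filter Topology Function

lemma exists_injective_apply_eq_range_eq {X Y : Type*} [Countable Y] [Infinite Y] {S : Set X}
    (hcount : S.Countable) (hinf : S.Infinite) (y : Y) {x : X} (hx : x ∈ S) :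
    ∃ u : Y → X, Injective u ∧ u y = x ∧ Set.range u = S := by
  classical
  have := hcount.to_subtype
  have := hinf.to_subtype
  obtain ⟨g⟩ := nonempty_equiv_of_countable (α := Y) (β := S)
  let g' : Y ≃ S := g.setValue y ⟨x, hx⟩
  refine ⟨Subtype.val ∘ g', Subtype.val_injective.comp g'.injective, ?_, ?_⟩
  · exact congrArg Subtype.val (g.setValue_eq y ⟨x, hx⟩)
  · rw [g'.surjective.range_comp, Subtype.range_coe]

lemma exists_homeomorph_prod_of_range_eq_fiber {X Y ι : Type*} [TopologicalSpace X] [T2Space X]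
    [TopologicalSpace Y] [CompactSpace Y] [TopologicalSpace ι] [CompactSpace ι]
    [DiscreteTopology ι] {π : X → ι} {f : ι → Y → X} (hcont : ∀ i, Continuous (f i))
    (hinj : ∀ i, Injective (f i)) (hrange : ∀ i, Set.range (f i) = π ⁻¹' {i}) :
    ∃ φ : X ≃ₜ Y × ι, ∀ y i, φ.symm (y, i) = f i y := by
  let F : Y × ι → X := fun p => f p.2 p.1
  have hF : Continuous F := continuous_prod_of_discrete_right.2 hcont
  have hπF : ∀ y i, π (f i y) = i := fun y i => (hrange i).subset ⟨y, rfl⟩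
  have F_injective : Injective F := by
    rintro ⟨y, i⟩ ⟨z, j⟩ h
    obtain rfl : i = j := by rw [← hπF y i, ← hπF z j]; exact congrArg π h
    exact congrArg (·, i) (hinj i h)
  have F_surjective : Surjective F := fun x =>
    have ⟨y, hy⟩ := (hrange (π x)).superset rfl
    ⟨(y, π x), hy⟩
  have equiv_continuous : Continuous (Equiv.ofBijective F ⟨F_injective, F_surjective⟩) := hF
  exact ⟨equiv_continuous.homeoOfEquivCompactToT2.symm, fun _ _ => rfl⟩

section Subgroups

open AddSubgroup

lemma finite_setOf_addSubgroup_ge {G : Type*} [AddGroup G] (N : AddSubgroup G) [N.FiniteIndex] :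
    {H : AddSubgroup G | N ≤ H}.Finite := by
  have : Finite {H : AddSubgroup G // N.normalCore ≤ H} :=
    .of_equiv _ (QuotientAddGroup.comapMk'OrderIso N.normalCore).toEquiv
  exact (Set.finite_coe_iff.1 this).subset fun _ hH => N.normalCore_le.trans hH

lemma finite_setOf_mem_int_prod {A : Type*} [AddGroup A] [Finite A] {x : ℤ × A} (hx : x.1 ≠ 0) :
    {H : AddSubgroup (ℤ × A) | x ∈ H}.Finite := by
  let N : AddSubgroup (ℤ × A) := (zmultiples (Nat.card A * x.1)).prod ⊥
  have : N.FiniteIndex := ⟨by simp [N, Int.index_zmultiples, hx, Nat.card_pos.ne']⟩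
  refine (finite_setOf_addSubgroup_ge N).subset ?_
  rintro H (hxH : x ∈ H) ⟨a, b⟩ ⟨ha, rfl : b = 0⟩
  obtain ⟨k, rfl⟩ := mem_zmultiples_iff.1 ha
  have hmultiple : k • Nat.card A • x = (k • (Nat.card A * x.1), 0) := by ext <;> simp
  exact hmultiple ▸ H.zsmul_mem (H.nsmul_mem hxH _) k

lemma eq_bot_prod_comap_inr {G A : Type*} [AddGroup G] [AddGroup A] {H : AddSubgroup (G × A)}
    (hH : ∀ x ∈ H, x.1 = 0) : H = AddSubgroup.prod ⊥ (H.comap (AddMonoidHom.inr G A)) := by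
  ext ⟨g, a⟩
  refine ⟨fun h => ?_, ?_⟩
  · obtain rfl : g = 0 := hH _ h
    exact ⟨rfl, h⟩
  · rintro ⟨rfl : g = 0, h⟩
    exact h

instance countable_addSubgroup_int_prod {A : Type*} [AddGroup A] [Finite A] :
    Countable (AddSubgroup (ℤ × A)) := by
  have hcover : Set.range (AddSubgroup.prod (⊥ : AddSubgroup ℤ)) ∪
      ⋃ x : {x : ℤ × A // x.1 ≠ 0}, {H | x.1 ∈ H} = Set.univ := by
    refine Set.eq_univ_of_forall fun H => ?_
    by_cases hH : ∀ x ∈ H, x.1 = 0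
    · exact .inl ⟨_, (eq_bot_prod_comap_inr hH).symm⟩
    · push Not at hH
      obtain ⟨x, hxH, hx⟩ := hH
      exact .inr (Set.mem_iUnion.2 ⟨⟨x, hx⟩, hxH⟩)
  rw [← Set.countable_univ_iff, ← hcover]
  exact (Set.finite_range _).countable.union
    (Set.countable_iUnion fun x => (finite_setOf_mem_int_prod x.2).countable)

lemma infinite_setOf_comap_inr_int_prod_eq {A : Type*} [AddGroup A] (K : AddSubgroup A) :
    {H : AddSubgroup (ℤ × A) | H.comap (AddMonoidHom.inr ℤ A) = K}.Infinite := by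
  have hindex : LeftInverse (fun H : AddSubgroup (ℤ × A) => (H.comap (.inl ℤ A)).index)
      (fun k : ℕ => (zmultiples (k : ℤ)).prod K) := fun k => by
    have : ((zmultiples (k : ℤ)).prod K).comap (.inl ℤ A) = zmultiples (k : ℤ) := by
      ext; simp [mem_prod, zero_mem]
    simp only [this, Int.index_zmultiples, Int.natAbs_natCast]
  refine Set.infinite_of_injective_forall_mem hindex.injective fun k => ?_
  ext
  simp [mem_prod, zero_mem]

lemma zmultiples_index_int (H : AddSubgroup ℤ) : zmultiples (H.index : ℤ) = H := by
  obtain ⟨a, rfl⟩ := Int.subgroup_cyclic H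
  rw [← zmultiples_eq_closure, Int.index_zmultiples, Int.zmultiples_natAbs]

variable {n : ℕ}

lemma zmultiples_index_zmod (H : AddSubgroup (ZMod n)) : zmultiples (H.index : ZMod n) = H := by
  have hsurj : Surjective (Int.castAddHom (ZMod n)) := ZMod.intCast_surjective
  calc zmultiples (H.index : ZMod n)
      = (zmultiples (H.index : ℤ)).map (Int.castAddHom (ZMod n)) := by
        simp [AddMonoidHom.map_zmultiples]
    _ = (H.comap (Int.castAddHom (ZMod n))).map (Int.castAddHom (ZMod n)) := by
        rw [← index_comap_of_surjective H hsurj, zmultiples_index_int]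
    _ = H := map_comap_eq_self_of_surjective hsurj H

lemma index_zmultiples_natCast_zmod {m : ℕ} (hm : m ∣ n) :
    (zmultiples (m : ZMod n)).index = m := by
  have hsurj : Surjective (Int.castAddHom (ZMod n)) := ZMod.intCast_surjective
  have hle : (Int.castAddHom (ZMod n)).ker ≤ zmultiples (m : ℤ) := by
    rw [ZMod.ker_intCastAddHom, zmultiples_le, Int.mem_zmultiples_iff]
    exact_mod_cast hm
  have hmap : (zmultiples (m : ℤ)).map (Int.castAddHom (ZMod n)) = zmultiples (m : ZMod n) := by
    simp [AddMonoidHom.map_zmultiples]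
  rw [← hmap, index_map_eq _ hsurj hle, Int.index_zmultiples, Int.natAbs_natCast]

lemma index_dvd_zmod (H : AddSubgroup (ZMod n)) : H.index ∣ n := by
  simpa using H.index_dvd_card

lemma exists_addSubgroup_zmod_iff [NeZero n] {P : AddSubgroup (ZMod n) → Prop} :
    (∃ H, P H) ↔ ∃ m : ℕ, 0 < m ∧ m ∣ n ∧ P (zmultiples (m : ZMod n)) := by
  constructor
  · rintro ⟨H, hH⟩
    have hdvd := index_dvd_zmod H
    exact ⟨H.index, Nat.pos_of_dvd_of_pos hdvd (NeZero.pos n), hdvd, by rwa [zmultiples_index_zmod]⟩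
  · rintro ⟨m, -, -, hm⟩
    exact ⟨_, hm⟩

lemma card_addSubgroup_zmod (n : ℕ) [NeZero n] :
    Nat.card (AddSubgroup (ZMod n)) = n.divisors.card := by
  have hbij : Set.BijOn AddSubgroup.index (Set.univ : Set (AddSubgroup (ZMod n))) n.divisors :=
    Set.InvOn.bijOn (f' := fun m : ℕ => zmultiples (m : ZMod n))
      ⟨fun H _ => zmultiples_index_zmod H,
        fun m hm => index_zmultiples_natCast_zmod (Nat.dvd_of_mem_divisors hm)⟩
      (fun H _ => Nat.mem_divisors.2 ⟨index_dvd_zmod H, NeZero.ne n⟩) (Set.mapsTo_univ _ _)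
  rw [← Set.ncard_univ, hbij.ncard_eq, Set.ncard_coe_finset]

end Subgroups

namespace ChabautySpace

section Discrete

variable {G : Type*} [AddGroup G] [TopologicalSpace G] [DiscreteTopology G]

lemma isClopen_setOf_mem (x : G) : IsClopen {H : ChabautySpace G | x ∈ H.1} := by
  constructor
  · refine ⟨TopologicalSpace.isOpen_generateFrom_of_mem (.inl ⟨{x}, isCompact_singleton, ?_⟩)⟩
    ext H
    simp
  · refine TopologicalSpace.isOpen_generateFrom_of_mem (.inr ⟨{x}, isOpen_discrete _, ?_⟩)
    ext H
    simp

instance instTotallySeparatedSpace : TotallySeparatedSpace (ChabautySpace G) := by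
  refine totallySeparatedSpace_iff_exists_isClopen.2 fun H K hne => ?_
  obtain ⟨x, hx⟩ : ∃ x, ¬(x ∈ H.1 ↔ x ∈ K.1) := by
    by_contra! h
    exact hne (Subtype.ext (AddSubgroup.ext h))
  by_cases hH : x ∈ H.1
  · exact ⟨_, isClopen_setOf_mem x, hH, fun hK => hx (iff_of_true hH hK)⟩
  · exact ⟨_, (isClopen_setOf_mem x).compl, hH, fun hK => hx (iff_of_false hH hK)⟩

lemma tendsto_of_eventually_mem_iff {α : Type*} {l : Filter α} {u : α → ChabautySpace G}
    {H : ChabautySpace G} (h : ∀ x, ∀ᶠ a in l, (x ∈ (u a).1 ↔ x ∈ H.1)) :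
    Tendsto u l (𝓝 H) := by
  refine TopologicalSpace.tendsto_nhds_generateFrom_iff.2 ?_
  rintro _ (⟨K, hK, rfl⟩ | ⟨U, -, rfl⟩) hH
  · filter_upwards [(eventually_all_finite hK.finite_of_discrete).2 fun x _ => h x] with a ha
    exact Set.eq_empty_of_forall_notMem fun x hx =>
      Set.eq_empty_iff_forall_notMem.1 hH x ⟨(ha x hx.2).1 hx.1, hx.2⟩
  · obtain ⟨x, hx, hxU⟩ := hH
    filter_upwards [h x] with a ha
    exact ⟨x, ha.2 hx, hxU⟩

end Discrete

section IntProd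

variable {A : Type*} [AddGroup A] [TopologicalSpace A]

/-- The slice `{a | (0, a) ∈ H}` of a closed subgroup `H` of `ℤ × A`, as a subgroup of `A`. The
Chabauty space decomposes into the fibers of this map. -/
def slice (H : ChabautySpace (ℤ × A)) : AddSubgroup A :=
  H.1.comap (AddMonoidHom.inr ℤ A)

variable [DiscreteTopology A]

/-- The point `{0} × K` of the Chabauty space of `ℤ × A`, the limit point of the subgroups with
slice `K`. -/
def botProd (K : AddSubgroup A) : ChabautySpace (ℤ × A) :=
  ⟨AddSubgroup.prod ⊥ K, isClosed_discrete _⟩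

lemma slice_botProd (K : AddSubgroup A) : slice (botProd K) = K := by
  ext
  simp [slice, botProd, AddSubgroup.mem_prod]

lemma infinite_slice_preimage_singleton (K : AddSubgroup A) :
    (slice ⁻¹' {K} : Set (ChabautySpace (ℤ × A))).Infinite := by
  refine (infinite_setOf_comap_inr_int_prod_eq K).preimage (f := Subtype.val) fun H _ => ?_
  exact ⟨⟨H, isClosed_discrete _⟩, rfl⟩

variable [Finite A]

lemma tendsto_cofinite_botProd {α : Type*} {u : α → ChabautySpace (ℤ × A)} (hu : Injective u)
    {K : AddSubgroup A} (hK : ∀ a, slice (u a) = K) : Tendsto u cofinite (𝓝 (botProd K)) := by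
  refine tendsto_of_eventually_mem_iff fun ⟨k, b⟩ => ?_
  obtain rfl | hk := eq_or_ne k 0
  · have mem_iff (H : ChabautySpace (ℤ × A)) : ((0 : ℤ), b) ∈ H.1 ↔ b ∈ slice H := .rfl
    simp only [mem_iff, hK, slice_botProd, eventually_true]
  · have hfin : {a | (k, b) ∈ (u a).1}.Finite :=
      (finite_setOf_mem_int_prod (x := (k, b)) hk).preimage
        (Subtype.val_injective.comp hu).injOn
    filter_upwards [hfin.compl_mem_cofinite] with a ha
    exact iff_of_false ha fun h => hk h.1

lemma exists_continuous_injective_range_eq_slice_preimage (K : AddSubgroup A) :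
    ∃ u : OnePoint ℕ → ChabautySpace (ℤ × A), Continuous u ∧ Injective u ∧ u ∞ = botProd K ∧
      Set.range u = slice ⁻¹' {K} := by
  have : Countable (ChabautySpace (ℤ × A)) := Subtype.countable
  have : Countable (OnePoint ℕ) := Option.instCountable
  obtain ⟨u, hinj, hinfty, hrange⟩ := exists_injective_apply_eq_range_eq (Set.to_countable _)
    (infinite_slice_preimage_singleton K) (∞ : OnePoint ℕ) (slice_botProd K)
  refine ⟨u, (OnePoint.continuous_iff_from_discrete u).2 ?_, hinj, hinfty, hrange⟩
  rw [hinfty]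
  exact tendsto_cofinite_botProd (hinj.comp OnePoint.coe_injective)
    fun j => hrange.subset ⟨(j : OnePoint ℕ), rfl⟩

end IntProd

end ChabautySpace

open ChabautySpace in
theorem chabauty_Z_ZMod_homeomorph_general (A : Type*) [AddGroup A] [Finite A]
    [TopologicalSpace A] [DiscreteTopology A] :
    ∃ φ : ChabautySpace (ℤ × A) ≃ₜ OnePoint ℕ × Fin (Nat.card (AddSubgroup A)),
      ∀ H : ChabautySpace (ℤ × A),
        (φ H).1 = ∞ ↔ ∃ K : AddSubgroup A, H.1 = AddSubgroup.prod ⊥ K := by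
  choose u hcont hinj hinfty hrange using
    exists_continuous_injective_range_eq_slice_preimage (A := A)
  let e := Finite.equivFin (AddSubgroup A)
  obtain ⟨φ, hφ⟩ := exists_homeomorph_prod_of_range_eq_fiber (π := e ∘ slice)
    (fun i => hcont (e.symm i)) (fun i => hinj (e.symm i)) fun i =>
      (hrange (e.symm i)).trans (Set.ext fun _ => e.eq_symm_apply)
  refine ⟨φ, fun H => ?_⟩
  obtain ⟨⟨p, i⟩, rfl⟩ := φ.symm.surjective H
  rw [φ.apply_symm_apply, hφ]
  constructor
  · rintro rfl
    exact ⟨e.symm i, congrArg Subtype.val (hinfty _)⟩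
  · rintro ⟨K, hK⟩
    have hu : u (e.symm i) p = botProd K := Subtype.ext hK
    have hslice : e.symm i = K := by
      rw [← slice_botProd K, ← hu]
      exact ((hrange _).subset ⟨p, rfl⟩).symm
    rw [hslice, ← hinfty] at hu
    exact hinj K hu

/-- The Chabauty space of `G = ℤ × ℤ/nℤ` is homeomorphic to `ℕ̄ × [d(n)]`, where the
accumulation points `(∞, i)` correspond to the `d(n)` subgroups `{0} × ⟨m⟩`, for `m` a
positive divisor of `n`. -/
theorem chabauty_Z_ZMod_homeomorph (n : ℕ) (hn : 1 ≤ n) :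
    ∃ φ : ChabautySpace (ℤ × ZMod n) ≃ₜ OnePoint ℕ × Fin n.divisors.card,
      ∀ H : ChabautySpace (ℤ × ZMod n),
        ((φ H).1 = ∞ ↔ ∃ m : ℕ, 0 < m ∧ m ∣ n ∧
          H.1 = AddSubgroup.prod ⊥ (AddSubgroup.zmultiples (m : ZMod n))) := by
  have : NeZero n := ⟨Nat.one_le_iff_ne_zero.1 hn⟩
  rw [← card_addSubgroup_zmod]
  obtain ⟨φ, hφ⟩ := chabauty_Z_ZMod_homeomorph_general (ZMod n)
  exact ⟨φ, fun H => (hφ H).trans exists_addSubgroup_zmod_iff⟩
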